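/- arXiv:1606.08432 — 2 statements merged into one kernel-verified Lean document; each statement's English description precedes it below -/
import Mathlib

section
/- Let p ≥ 5 be a prime and r a non-negative integer. Then ∑_{k=rp}^{(r+1)p-1} C(2k,k)/(k+1) ≡ C(2r,r)·( (3/2)·(p/3) - 1/2 - r/(r+1) ) (mod p²), as a congruence of rational numbers, where (p/3) denotes the Legendre symbol of p modulo 3. -/
/-- Congruence of rational numbers modulo `p^m`: `a ≡ b (mod p^m)` means
`a - b = p^m · (s/t)` with `p` not dividing `t`. -/
def ratCongr (p m : ℕ) (a b : ℚ) : Prop :=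
  ∃ s t : ℤ, ¬ ((p : ℤ) ∣ t) ∧ (a - b) * (t : ℚ) = (p : ℚ) ^ m * (s : ℚ)

/-- The Legendre symbol `(p/3)`: `1` if `p ≡ 1 (mod 3)` and `-1` if `p ≡ 2 (mod 3)`. -/
def leg3 (p : ℕ) : ℤ := if p % 3 = 1 then 1 else -1

/-!
Doubling a sum of Catalan numbers telescopes it into the partial sums `S n = ∑_{k < n} C(2k, k)` and
the central binomial coefficients `C(2n, n)`, so it suffices that `C(2rp, rp) ≡ C(2r, r)` and
`S (rp) ≡ (p/3) S r` modulo `p²`. Both quantities are linear functionals of the polynomial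
`(1 + X) ^ (2n)`: the coefficient of `X ^ n` in it, and the coefficient of `X ^ n` in its product
with `X / (1 + X + X²) = ∑ (n/3) X ^ n`. Write `(1 + X) ^ p = 1 + X ^ p + p Q`. Modulo `p²`,
`(1 + X) ^ (2rp)` is `(1 + X ^ p) ^ (2r)` plus a multiple of `p Q (1 + X ^ p) ^ (2r - 1)`.
The functionals take the expected values on the first term. They vanish on the second because
neither `Q` nor `X Q / (1 + X + X²)` has an exponent divisible by `p`; for `p ≥ 5` the latter is a
polynomial since `(1 + ω) ^ p = 1 + ω ^ p` for a primitive cube root of unity `ω`.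
-/

open Polynomial

section CubeRoot

variable {R : Type*} [CommRing R] {x : R} {n : ℕ}

lemma one_add_pow_add_pow_two_mul_eq_zero (hx : 1 + x + x ^ 2 = 0) (hn : ¬ 3 ∣ n) :
    1 + x ^ n + x ^ (2 * n) = 0 := by
  have hx3 : x ^ 3 = 1 := by linear_combination (x - 1) * hx
  rw [mul_comm 2 n, pow_mul, pow_eq_pow_mod n hx3]
  obtain h | h : n % 3 = 1 ∨ n % 3 = 2 := by omega
  · rw [h, pow_one, hx]
  · rw [h]
    linear_combination hx + x * hx3

lemma one_add_pow_of_one_add_add_sq_eq_zero (hx : 1 + x + x ^ 2 = 0) (hodd : Odd n)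
    (hn : ¬ 3 ∣ n) : (1 + x) ^ n = 1 + x ^ n := by
  have hneg : 1 + x = -x ^ 2 := by linear_combination hx
  rw [hneg, hodd.neg_pow, ← pow_mul]
  linear_combination -one_add_pow_add_pow_two_mul_eq_zero hx hn

end CubeRoot

section Contract

variable {R : Type*} [CommSemiring R] {p : ℕ} {f : R[X]}

lemma contract_eq_zero_of_natDegree_lt (h0 : f.coeff 0 = 0) (hdeg : f.natDegree < p) :
    contract p f = 0 := by
  ext k
  rw [coeff_contract (by omega), coeff_zero]
  rcases k.eq_zero_or_pos with rfl | hk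
  · rwa [zero_mul]
  · exact coeff_eq_zero_of_natDegree_lt (hdeg.trans_le (Nat.le_mul_of_pos_left p hk))

lemma coeff_mul_expand_eq_zero (hp : p ≠ 0) (hf : contract p f = 0) (g : R[X]) (k : ℕ) :
    (f * expand R p g).coeff (k * p) = 0 := by
  rw [← coeff_contract hp, contract_mul_expand hp, hf, zero_mul, coeff_zero]

end Contract

lemma dvd_of_dvd_smul_of_monic {R : Type*} [CommRing R] [NoZeroDivisors R] {m f : R[X]} {c : R}
    (hm : m.Monic) (hc : c ≠ 0) (h : m ∣ c • f) : m ∣ f := by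
  rwa [← modByMonic_eq_zero_iff_dvd hm, smul_modByMonic, smul_eq_zero_iff_right hc,
    modByMonic_eq_zero_iff_dvd hm] at h

section BinomialQuotient

/-- For `p` prime, the quotient `((1 + X) ^ p - 1 - X ^ p) / p`, encoded by its coefficients; for
other `p` the integer divisions round. -/
noncomputable def binomialQuotient (p : ℕ) : ℤ[X] :=
  ∑ i ∈ Finset.Ioo 0 p, monomial i (p.choose i / p : ℤ)

variable {p : ℕ}

lemma coeff_binomialQuotient (p i : ℕ) :
    (binomialQuotient p).coeff i = if i ∈ Finset.Ioo 0 p then (p.choose i / p : ℤ) else 0 := by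
  simp only [binomialQuotient, finsetSum_coeff, coeff_monomial, Finset.sum_ite_eq']

lemma natDegree_binomialQuotient_lt (hp : p ≠ 0) : (binomialQuotient p).natDegree < p := by
  rw [Nat.lt_iff_le_pred (Nat.pos_of_ne_zero hp), natDegree_le_iff_coeff_eq_zero]
  intro i hi
  rw [coeff_binomialQuotient, if_neg]
  simp only [Finset.mem_Ioo]
  omega

lemma contract_binomialQuotient (hp : p ≠ 0) : contract p (binomialQuotient p) = 0 :=
  contract_eq_zero_of_natDegree_lt (by simp [coeff_binomialQuotient])
    (natDegree_binomialQuotient_lt hp)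

lemma one_add_X_pow_eq_add_mul_binomialQuotient (hp : p.Prime) :
    (1 + X : ℤ[X]) ^ p = 1 + X ^ p + (p : ℤ[X]) * binomialQuotient p := by
  ext i
  simp only [coeff_one_add_X_pow, coeff_add, coeff_one, coeff_X_pow, coeff_natCast_mul,
    coeff_binomialQuotient, Finset.mem_Ioo]
  have hp0 := hp.pos
  obtain rfl | ⟨hi0, hip⟩ | rfl | hip : i = 0 ∨ (0 < i ∧ i < p) ∨ i = p ∨ p < i := by omega
  · simp [hp.ne_zero.symm]
  · have hdvd : (p : ℤ) ∣ p.choose i := by exact_mod_cast hp.dvd_choose_self hi0.ne' hip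
    simp [hi0, hi0.ne', hip, hip.ne, Int.mul_ediv_cancel' hdvd]
  · simp [hp.ne_zero]
  · simp [Nat.choose_eq_zero_of_lt hip, hip.not_gt, hip.ne', (hp0.trans hip).ne']

lemma monic_one_add_X_add_X_sq : (1 + X + X ^ 2 : ℤ[X]).Monic := by
  monicity!

lemma one_add_X_add_X_sq_dvd_binomialQuotient (hp : p.Prime) (hodd : Odd p) (h3 : ¬ 3 ∣ p) :
    (1 + X + X ^ 2 : ℤ[X]) ∣ binomialQuotient p := by
  set m : ℤ[X] := 1 + X + X ^ 2 with hm
  have hroot : 1 + AdjoinRoot.root m + AdjoinRoot.root m ^ 2 = 0 := by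
    simpa [hm] using AdjoinRoot.mk_self (f := m)
  have hdvd : m ∣ (p : ℤ) • binomialQuotient p := by
    have hsmul : (p : ℤ) • binomialQuotient p = (1 + X) ^ p - (1 + X ^ p) := by
      rw [one_add_X_pow_eq_add_mul_binomialQuotient hp, zsmul_eq_mul]
      push_cast
      ring
    rw [hsmul, ← AdjoinRoot.mk_eq_mk]
    simpa using one_add_pow_of_one_add_add_sq_eq_zero hroot hodd h3
  exact dvd_of_dvd_smul_of_monic monic_one_add_X_add_X_sq (by exact_mod_cast hp.ne_zero) hdvd

lemma contract_X_mul_eq_zero_of_binomialQuotient_eq {R : ℤ[X]} (hp : p ≠ 0)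
    (hR : binomialQuotient p = (1 + X + X ^ 2) * R) : contract p (X * R) = 0 := by
  refine contract_eq_zero_of_natDegree_lt (by simp) ?_
  rcases eq_or_ne R 0 with rfl | hR0
  · simpa using Nat.pos_of_ne_zero hp
  · have hdeg := congrArg natDegree hR
    have h2 : (1 + X + X ^ 2 : ℤ[X]).natDegree = 2 := by compute_degree!
    rw [monic_one_add_X_add_X_sq.natDegree_mul' hR0, h2] at hdeg
    have := natDegree_binomialQuotient_lt hp
    rw [natDegree_X_mul hR0]
    omega

lemma map_one_add_X_pow_mul_modEq (hp : p.Prime) {n : ℕ} (L : ℤ[X] →ₗ[ℤ] ℤ)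
    (hL : ∀ g, L (binomialQuotient p * expand ℤ p g) = 0) :
    L ((1 + X) ^ (n * p)) ≡ L (expand ℤ p ((1 + X) ^ n)) [ZMOD p ^ 2] := by
  obtain ⟨K, hK⟩ := sq_dvd_add_pow_sub_sub ((p : ℤ[X]) * binomialQuotient p) (1 + X ^ p) n
  have hexpand (k : ℕ) : (1 + X ^ p : ℤ[X]) ^ k = expand ℤ p ((1 + X) ^ k) := by simp
  have hdecomp : (1 + X : ℤ[X]) ^ (n * p) = expand ℤ p ((1 + X) ^ n)
      + (n * p : ℤ) • (binomialQuotient p * expand ℤ p ((1 + X) ^ (n - 1)))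
      + (p ^ 2 : ℤ) • (binomialQuotient p ^ 2 * K) := by
    rw [pow_mul', one_add_X_pow_eq_add_mul_binomialQuotient hp, ← hexpand, ← hexpand]
    simp only [zsmul_eq_mul]
    push_cast
    linear_combination hK
  refine (Int.modEq_iff_dvd.2 ⟨L (binomialQuotient p ^ 2 * K), ?_⟩).symm
  rw [hdecomp, map_add, map_add, map_smul, map_smul, hL]
  simp only [smul_eq_mul]
  ring

theorem choose_mul_mul_modEq (hp : p.Prime) (n k : ℕ) :
    ((n * p).choose (k * p) : ℤ) ≡ n.choose k [ZMOD p ^ 2] := by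
  have h := map_one_add_X_pow_mul_modEq hp (n := n) (lcoeff ℤ (k * p))
    fun g ↦ coeff_mul_expand_eq_zero hp.ne_zero (contract_binomialQuotient hp.ne_zero) g k
  rwa [lcoeff_apply, lcoeff_apply, coeff_expand_mul hp.pos, coeff_one_add_X_pow,
    coeff_one_add_X_pow] at h

lemma centralBinom_mul_modEq (hp : p.Prime) (r : ℕ) :
    ((r * p).centralBinom : ℤ) ≡ r.centralBinom [ZMOD p ^ 2] := by
  rw [Nat.centralBinom, Nat.centralBinom, ← mul_assoc]
  exact choose_mul_mul_modEq hp (2 * r) r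

end BinomialQuotient

section LegendreFunctional

lemma legendreSym_three_add_add_eq_zero (n : ℤ) :
    legendreSym 3 n + legendreSym 3 (n + 1) + legendreSym 3 (n + 2) = 0 := by
  have h : ∀ a : ZMod 3, quadraticChar (ZMod 3) a + quadraticChar (ZMod 3) (a + 1)
      + quadraticChar (ZMod 3) (a + 2) = 0 := by decide
  simpa [legendreSym] using h n

/-- The generating function `∑ (n/3) X ^ n` of the Legendre symbol modulo `3`. -/
noncomputable def legendreSeries : PowerSeries ℤ :=
  PowerSeries.mk fun n ↦ legendreSym 3 n

lemma one_add_X_add_X_sq_mul_legendreSeries :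
    (1 + PowerSeries.X + PowerSeries.X ^ 2) * legendreSeries = PowerSeries.X := by
  ext n
  rw [add_mul, add_mul, one_mul, pow_two, mul_assoc]
  rcases n with _ | _ | n
  · simp [legendreSeries]
  · simp [legendreSeries, PowerSeries.coeff_succ_X_mul]
  · have h := legendreSym_three_add_add_eq_zero n
    simp only [map_add, PowerSeries.coeff_succ_X_mul, legendreSeries, PowerSeries.coeff_mk,
      PowerSeries.coeff_X]
    rw [if_neg (by omega)]
    push_cast
    rw [add_assoc (n : ℤ), one_add_one_eq_two]
    linear_combination h

/-- The functional sending `f` to the coefficient of `X ^ n` in `f * legendreSeries`, that is, to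
`∑_{i ≤ n} ((n - i)/3) f_i`. -/
noncomputable def legendreFunctional (n : ℕ) : ℤ[X] →ₗ[ℤ] ℤ :=
  PowerSeries.coeff n ∘ₗ LinearMap.mulRight ℤ legendreSeries ∘ₗ
    (coeToPowerSeries.algHom ℤ).toLinearMap

lemma legendreFunctional_apply (n : ℕ) (f : ℤ[X]) :
    legendreFunctional n f = PowerSeries.coeff n ((f : PowerSeries ℤ) * legendreSeries) := by
  simp [legendreFunctional]

lemma legendreFunctional_succ_X_mul (n : ℕ) (f : ℤ[X]) :
    legendreFunctional (n + 1) (X * f) = legendreFunctional n f := by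
  rw [legendreFunctional_apply, legendreFunctional_apply, coe_mul, coe_X, mul_assoc,
    PowerSeries.coeff_succ_X_mul]

lemma legendreFunctional_monomial (n k : ℕ) (a : ℤ) :
    legendreFunctional n (monomial k a) = if k ≤ n then a * legendreSym 3 (n - k : ℕ) else 0 := by
  rw [legendreFunctional_apply, ← C_mul_X_pow_eq_monomial, coe_mul, coe_C, coe_pow, coe_X,
    mul_assoc, PowerSeries.coeff_C_mul, PowerSeries.coeff_X_pow_mul', legendreSeries,
    PowerSeries.coeff_mk, mul_ite, mul_zero]

lemma legendreFunctional_expand {p : ℕ} (hp : p ≠ 0) (r : ℕ) (f : ℤ[X]) :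
    legendreFunctional (r * p) (expand ℤ p f) = legendreSym 3 p * legendreFunctional r f := by
  induction f using Polynomial.induction_on' with
  | add f g hf hg => rw [map_add, map_add, map_add, hf, hg, mul_add]
  | monomial k a =>
    simp only [expand_monomial, legendreFunctional_monomial, ← Nat.sub_mul, Nat.cast_mul,
      legendreSym.mul, Nat.mul_le_mul_right_iff (Nat.pos_of_ne_zero hp)]
    split_ifs <;> ring

lemma legendreFunctional_one_add_X_add_X_sq_mul (n : ℕ) (f : ℤ[X]) :
    legendreFunctional n ((1 + X + X ^ 2) * f) = (X * f).coeff n := by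
  rw [legendreFunctional_apply, ← coeff_coe]
  congr 1
  push_cast
  linear_combination (f : PowerSeries ℤ) * one_add_X_add_X_sq_mul_legendreSeries

/-- The partial sum `C(0, 0) + C(2, 1) + ⋯ + C(2n - 2, n - 1)`, without the `n`-th term. -/
def sumCentralBinom (n : ℕ) : ℤ := ∑ k ∈ Finset.range n, (k.centralBinom : ℤ)

lemma sumCentralBinom_succ (n : ℕ) :
    sumCentralBinom (n + 1) = sumCentralBinom n + n.centralBinom :=
  Finset.sum_range_succ _ n

lemma legendreFunctional_one_add_X_pow (n : ℕ) :
    legendreFunctional n ((1 + X) ^ (2 * n)) = sumCentralBinom n := by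
  induction n with
  | zero => simp [legendreFunctional_apply, legendreSeries, sumCentralBinom]
  | succ n ih =>
    have hsplit : (1 + X : ℤ[X]) ^ (2 * (n + 1))
        = X * (1 + X) ^ (2 * n) + (1 + X + X ^ 2) * (1 + X) ^ (2 * n) := by ring
    rw [hsplit, map_add, legendreFunctional_succ_X_mul, ih,
      legendreFunctional_one_add_X_add_X_sq_mul, coeff_X_mul, coeff_one_add_X_pow,
      sumCentralBinom_succ, Nat.centralBinom]

lemma legendreFunctional_binomialQuotient_mul_expand {p : ℕ} (hp : p.Prime) (hodd : Odd p)
    (h3 : ¬ 3 ∣ p) (r : ℕ) (g : ℤ[X]) :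
    legendreFunctional (r * p) (binomialQuotient p * expand ℤ p g) = 0 := by
  obtain ⟨R, hR⟩ := one_add_X_add_X_sq_dvd_binomialQuotient hp hodd h3
  rw [hR, mul_assoc, legendreFunctional_one_add_X_add_X_sq_mul, ← mul_assoc]
  exact coeff_mul_expand_eq_zero hp.ne_zero
    (contract_X_mul_eq_zero_of_binomialQuotient_eq hp.ne_zero hR) g r

theorem sumCentralBinom_mul_modEq {p : ℕ} (hp : p.Prime) (hodd : Odd p) (h3 : ¬ 3 ∣ p) (r : ℕ) :
    sumCentralBinom (r * p) ≡ legendreSym 3 p * sumCentralBinom r [ZMOD p ^ 2] := by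
  have h := map_one_add_X_pow_mul_modEq hp (n := 2 * r) (legendreFunctional (r * p))
    (legendreFunctional_binomialQuotient_mul_expand hp hodd h3 r)
  rwa [legendreFunctional_expand hp.ne_zero, legendreFunctional_one_add_X_pow,
    mul_assoc, legendreFunctional_one_add_X_pow] at h

end LegendreFunctional

lemma legendreSym_three_eq_leg3 {n : ℕ} (hn : ¬ 3 ∣ n) : legendreSym 3 n = leg3 n := by
  rw [legendreSym.mod, leg3]
  obtain h | h : n % 3 = 1 ∨ n % 3 = 2 := by omega
  · have : (n : ℤ) % (3 : ℕ) = 1 := by omega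
    rw [this, if_pos h, legendreSym.at_one]
  · have : (n : ℤ) % (3 : ℕ) = 2 := by omega
    rw [this, if_neg (by omega)]
    decide

lemma two_mul_centralBinom_div_succ (k : ℕ) :
    2 * ((k.centralBinom : ℚ) / (k + 1)) = 4 * k.centralBinom - (k + 1).centralBinom := by
  have h : ((k : ℚ) + 1) * (k + 1).centralBinom = 2 * (2 * k + 1) * k.centralBinom := by
    exact_mod_cast Nat.succ_mul_centralBinom_succ k
  field_simp
  linear_combination h

lemma two_mul_sum_Ico_centralBinom_div_succ {a b : ℕ} (hab : a ≤ b) :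
    2 * ∑ k ∈ Finset.Ico a b, (k.centralBinom : ℚ) / (k + 1) =
      3 * (sumCentralBinom b - sumCentralBinom a) - (b.centralBinom - a.centralBinom) := by
  induction b, hab using Nat.le_induction with
  | base => simp
  | succ b hab ih =>
    rw [Finset.sum_Ico_succ_top hab, mul_add, ih, two_mul_centralBinom_div_succ,
      sumCentralBinom_succ]
    push_cast
    ring

lemma ratCongr_of_mul_eq_intCast {p m : ℕ} {x y : ℚ} {a b t : ℤ} (ht : ¬ (p : ℤ) ∣ t)
    (hx : t * x = a) (hy : t * y = b) (hab : a ≡ b [ZMOD p ^ m]) : ratCongr p m x y := by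
  obtain ⟨s, hs⟩ := hab.symm.dvd
  refine ⟨s, t, ht, ?_⟩
  calc (x - y) * t = ((a - b : ℤ) : ℚ) := by
        push_cast
        rw [← hx, ← hy]
        ring
    _ = p ^ m * s := by rw [hs]; push_cast; rfl

theorem block_sum_catalan (p r : ℕ) (hp : p.Prime) (hp5 : 5 ≤ p) :
    ratCongr p 2
      (∑ k ∈ Finset.Ico (r * p) ((r + 1) * p), ((2 * k).choose k : ℚ) / (k + 1))
      (((2 * r).choose r : ℚ) * (3 / 2 * (leg3 p : ℚ) - 1 / 2 - r / (r + 1))) := by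
  simp only [← Nat.centralBinom_eq_two_mul_choose]
  have hodd : Odd p := hp.odd_of_ne_two (by omega)
  have h3 : ¬ 3 ∣ p := fun h ↦ by
    have := (Nat.prime_dvd_prime_iff_eq Nat.prime_three hp).1 h
    omega
  have h2 : ¬ (p : ℤ) ∣ 2 := fun h ↦ by have := Int.le_of_dvd two_pos h; omega
  have hS := sumCentralBinom_mul_modEq hp hodd h3
  have hB := centralBinom_mul_modEq hp
  refine ratCongr_of_mul_eq_intCast h2 ?_ ?_
    ((((hS (r + 1)).sub (hS r)).mul_left 3).sub ((hB (r + 1)).sub (hB r)))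
  · push_cast
    exact two_mul_sum_Ico_centralBinom_div_succ (Nat.mul_le_mul_right p r.le_succ)
  · rw [sumCentralBinom_succ, legendreSym_three_eq_leg3 h3]
    push_cast
    have hr : (r : ℚ) / (r + 1) = 1 - 1 / (r + 1) := by field_simp; ring
    rw [hr]
    linear_combination two_mul_centralBinom_div_succ r
end

section
/- Let p ≥ 5 be a prime. Then p·∑_{k=0}^{p-2} (C(2k,k)/(k+1))·(H_k - H_{2k}) ≡ C(2p-2,p-1)/p + (1/(p+1))·∑_{k=0}^{p} (-1)^k·C(p+1,k)·C(2p-2k,p-k) (mod p²), as a congruence of rational numbers. -/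
/-- The `n`-th harmonic number `H_n = ∑_{j=1}^n 1/j`, with `H_0 = 0`. -/
def H (n : ℕ) : ℚ := ∑ j ∈ Finset.range n, 1 / (j + 1 : ℚ)

/-!
Write `Cat k = C(2k, k) / (k + 1)` and `U n = ∑ k, (-1) ^ k * C(n - k, k)`. Expanding
`∏ j < k, (k + 1 + j - p)` to first order in `p` produces the difference of harmonic numbers:
`p * Cat k * (H k - H (2k)) ≡ (-1) ^ k * C(p - 1 - k, k) / (k + 1) - Cat k (mod p ^ 2)`. By
absorption, the rational sums on the right add up to `(1 + U (p - 1) - U (p + 1)) / (p + 1)`.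

The Catalan numbers are read off `((1 + X) ^ (2p) - X ^ p) / Φ₃`: since `Φ₃` divides
`(1 + X) ^ p - 1 - X ^ p`, this quotient agrees modulo `p ^ 2` with
`(1 + X ^ p + X ^ (2p)) / Φ₃ = Φ₃ₚ` in degrees `p - 2` and `p - 1`, where the coefficients of `Φ₃ₚ`
are those of the power series `1 / Φ₃`, namely `± U`. Hence
`∑ k < p, Cat k ≡ U (p - 1) - U (p + 1) (mod p ^ 2)`.

On the other side, Pascal's rule splits `∑ k, (-1) ^ k * C(p + 1, k) * C(2p - 2k, p - k)` into the
central coefficient of `Φ₃ ^ p`, which is `1` modulo `p ^ 2`, and a multiple of `p` that is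
`-p * ∑ k < p, Cat k` modulo `p ^ 2`.
-/

open Finset Nat Polynomial

namespace ratCongr

variable {p m : ℕ} {a b c d : ℚ}

lemma of_mul_eq_intCast {t a' b' : ℤ} (ht : ¬ (p : ℤ) ∣ t) (ha : a * t = a') (hb : b * t = b')
    (h : a' ≡ b' [ZMOD p ^ m]) : ratCongr p m a b := by
  obtain ⟨s, hs⟩ := h.symm.dvd
  refine ⟨s, t, ht, ?_⟩
  rw [sub_mul, ha, hb]
  exact_mod_cast hs

lemma refl (hp : p.Prime) (a : ℚ) : ratCongr p m a a :=
  ⟨0, 1, mt Int.natCast_dvd_natCast.1 hp.not_dvd_one, by simp⟩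

lemma add (hp : p.Prime) (hab : ratCongr p m a b) (hcd : ratCongr p m c d) :
    ratCongr p m (a + c) (b + d) := by
  obtain ⟨s, t, ht, h⟩ := hab
  obtain ⟨s', t', ht', h'⟩ := hcd
  refine ⟨s * t' + s' * t, t * t', (prime_iff_prime_int.1 hp).not_dvd_mul ht ht', ?_⟩
  push_cast
  linear_combination t' * h + t * h'

lemma trans (hp : p.Prime) (hab : ratCongr p m a b) (hbc : ratCongr p m b c) :
    ratCongr p m a c := by
  obtain ⟨s, t, ht, h⟩ := hab
  obtain ⟨s', t', ht', h'⟩ := hbc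
  refine ⟨s * t' + s' * t, t * t', (prime_iff_prime_int.1 hp).not_dvd_mul ht ht', ?_⟩
  push_cast
  linear_combination t' * h + t * h'

lemma sum {ι : Type*} {s : Finset ι} {f g : ι → ℚ} (hp : p.Prime)
    (h : ∀ i ∈ s, ratCongr p m (f i) (g i)) : ratCongr p m (∑ i ∈ s, f i) (∑ i ∈ s, g i) := by
  classical
  induction s using Finset.induction_on with
  | empty => exact refl hp 0
  | insert i s hi ih =>
    rw [sum_insert hi, sum_insert hi]
    exact (h i (mem_insert_self i s)).add hp (ih fun j hj ↦ h j (mem_insert_of_mem hj))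

end ratCongr

lemma sq_dvd_prod_sub_sub {ι R : Type*} [CommRing R] [DecidableEq ι] (s : Finset ι) (f : ι → R)
    (x : R) :
    x ^ 2 ∣ ∏ i ∈ s, (f i - x) - (∏ i ∈ s, f i - x * ∑ i ∈ s, ∏ j ∈ s.erase i, f j) := by
  obtain ⟨z, hz⟩ := binomExpansion (∏ i ∈ s, (X + C (f i))) 0 (-x)
  simp only [eval_prod, eval_add, eval_X, eval_C, derivative_prod_finset, derivative_add,
    derivative_X, derivative_C, eval_finsetSum, add_zero, mul_one, zero_add] at hz
  refine ⟨z, ?_⟩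
  simp only [sub_eq_neg_add (f _), hz]
  ring

lemma sum_prod_erase_eq_prod_mul_sum_one_div {ι K : Type*} [Field K] [DecidableEq ι] {s : Finset ι}
    {f : ι → K} (hf : ∀ i ∈ s, f i ≠ 0) :
    ∑ i ∈ s, ∏ j ∈ s.erase i, f j = (∏ i ∈ s, f i) * ∑ i ∈ s, 1 / f i := by
  rw [mul_sum]
  refine sum_congr rfl fun i hi ↦ ?_
  rw [mul_one_div, eq_div_iff (hf i hi), prod_erase_mul _ _ hi]

lemma H_add (m n : ℕ) : H (m + n) = H m + ∑ j ∈ range n, 1 / (m + 1 + j : ℚ) := by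
  simp only [H, sum_range_add, cast_add, add_right_comm]

lemma prod_range_add_one_add (k : ℕ) :
    ∏ j ∈ range k, ((k : ℤ) + 1 + j) = k ! * (2 * k).choose k := by
  rw [two_mul]
  exact_mod_cast (ascFactorial_eq_prod_range (k + 1) k).symm.trans
    (ascFactorial_eq_factorial_mul_choose k k)

lemma prod_range_add_one_add_sub {k n : ℕ} (hk : k < n) :
    ∏ j ∈ range k, ((k : ℤ) + 1 + j - n) = (-1) ^ k * (k ! * (n - 1 - k).choose k) := by
  have hneg (j : ℕ) : (k : ℤ) + 1 + j - n = -1 * (((n - 1 - k : ℕ) : ℤ) - j) := by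
    push_cast [show k ≤ n - 1 by omega, show 1 ≤ n by omega]
    ring
  simp only [hneg, prod_mul_distrib, prod_const, card_range]
  rw [← descPochhammer_eval_eq_prod_range, descPochhammer_eval_eq_descFactorial,
    descFactorial_eq_factorial_mul_choose, cast_mul]

lemma cast_catalan {K : Type*} [DivisionRing K] [CharZero K] (k : ℕ) :
    (catalan k : K) = ((2 * k).choose k : K) / (k + 1) := by
  rw [← centralBinom_eq_two_mul_choose, ← succ_mul_catalan_eq_centralBinom, cast_mul, cast_succ,
    ← Nat.cast_commute, mul_div_cancel_right₀ _ (cast_add_one_ne_zero k)]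

lemma ratCongr_mul_catalan_mul_harmonic_sub {p k : ℕ} (hp : p.Prime) (hk : k + 1 < p) :
    ratCongr p 2 (p * (((2 * k).choose k : ℚ) / (k + 1) * (H k - H (2 * k))))
      ((-1) ^ k * ((p - 1 - k).choose k : ℚ) / (k + 1) - catalan k) := by
  set f : ℕ → ℤ := fun j ↦ k + 1 + j with hf
  set e : ℤ := ∑ i ∈ range k, ∏ j ∈ (range k).erase i, f j with he
  have hk1 : (k + 1 : ℚ) ≠ 0 := cast_add_one_ne_zero k
  have hfact : ((k + 1)! : ℚ) = (k + 1) * k ! := by push_cast [factorial_succ]; ring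
  have heval : (e : ℚ) = k ! * (2 * k).choose k * (H (2 * k) - H k) := by
    have hprod : (∏ j ∈ range k, (k + 1 + j) : ℚ) = k ! * (2 * k).choose k := by
      exact_mod_cast prod_range_add_one_add k
    rw [two_mul, H_add, add_sub_cancel_left, ← two_mul, ← hprod,
      ← sum_prod_erase_eq_prod_mul_sum_one_div fun j _ ↦ by positivity, he]
    push_cast [hf]
    rfl
  refine .of_mul_eq_intCast (t := (k + 1)!) (a' := -(p * e))
    (b' := ∏ j ∈ range k, (f j - p) - ∏ j ∈ range k, f j) ?_ ?_ ?_ ?_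
  · rw [Int.natCast_dvd_natCast, hp.dvd_factorial]
    omega
  · push_cast
    rw [heval, hfact]
    field_simp
    ring
  · rw [hf, prod_range_add_one_add_sub (by omega), prod_range_add_one_add, cast_catalan]
    push_cast
    rw [hfact]
    field_simp
  · obtain ⟨z, hz⟩ := sq_dvd_prod_sub_sub (range k) f (p : ℤ)
    exact Int.modEq_iff_dvd.2 ⟨z, by linear_combination hz⟩

/-- The diagonal sum `∑ k, C(n - k, k) x ^ k`: the Jacobsthal polynomial of index `n + 1`, whose
value at `x = 1` is a Fibonacci number. -/
def diagChooseSum {R : Type*} [Semiring R] (x : R) (n : ℕ) : R :=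
  ∑ k ∈ range (n + 1), x ^ k * (n - k).choose k

section diagChooseSum

variable {R S : Type*} [CommSemiring R] [CommRing S]

@[simp]
lemma diagChooseSum_zero (x : R) : diagChooseSum x 0 = 1 := by simp [diagChooseSum]

@[simp]
lemma diagChooseSum_one (x : R) : diagChooseSum x 1 = 1 := by simp [diagChooseSum, sum_range_succ]

@[simp, norm_cast]
lemma intCast_diagChooseSum (x : ℤ) (n : ℕ) :
    ((diagChooseSum x n : ℤ) : S) = diagChooseSum (x : S) n := by
  simp [diagChooseSum]

lemma diagChooseSum_add_one (x : R) (n : ℕ) :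
    diagChooseSum x (n + 1) = ∑ k ∈ range n, x ^ (k + 1) * (n - k).choose (k + 1) + 1 := by
  rw [diagChooseSum, sum_range_succ', sum_range_succ]
  simp

lemma diagChooseSum_add_two (x : R) (n : ℕ) :
    diagChooseSum x (n + 2) = diagChooseSum x (n + 1) + x * diagChooseSum x n := by
  have hpascal : ∀ k ∈ range (n + 1), x ^ (k + 1) * ((n + 1 - k).choose (k + 1) : R) =
      x ^ (k + 1) * (n - k).choose (k + 1) + x * (x ^ k * (n - k).choose k) := fun k hk ↦ by
    rw [Nat.sub_add_comm (mem_range_succ_iff.1 hk), choose_succ_succ']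
    push_cast
    ring
  rw [diagChooseSum_add_one, sum_congr rfl hpascal, sum_add_distrib, ← mul_sum,
    ← diagChooseSum, sum_range_succ, diagChooseSum_add_one, Nat.sub_self, choose_zero_succ,
    cast_zero]
  ring

lemma diagChooseSum_neg_one_add_three (n : ℕ) :
    diagChooseSum (-1 : S) (n + 3) = -diagChooseSum (-1) n := by
  rw [diagChooseSum_add_two, diagChooseSum_add_two]
  ring

lemma add_two_mul_sum_pow_mul_choose_div {K : Type*} [Field K] [CharZero K] (x : K) (n : ℕ) :
    (n + 2) * (x * ∑ k ∈ range (n + 1), x ^ k * ((n - k).choose k : K) / (k + 1)) =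
      diagChooseSum x (n + 2) + x * diagChooseSum x n - 1 := by
  have hterm : ∀ k ∈ range (n + 1), (n + 2) * (x * (x ^ k * ((n - k).choose k : K) / (k + 1))) =
      x ^ (k + 1) * ((n + 1 - k).choose (k + 1) : K) + x * (x ^ k * (n - k).choose k) :=
    fun k hk ↦ by
    have hkn : k ≤ n := mem_range_succ_iff.1 hk
    have habsorb : ((n : K) + 1 - k) * (n - k).choose k =
        (n + 1 - k).choose (k + 1) * (k + 1) := by
      have := congrArg (Nat.cast (R := K)) (add_one_mul_choose_eq (n - k) k)
      rw [← Nat.sub_add_comm hkn] at this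
      push_cast [cast_sub (R := K) hkn.step] at this
      exact this
    have hk1 : (k + 1 : K) ≠ 0 := cast_add_one_ne_zero k
    field_simp
    linear_combination x ^ (k + 1) * habsorb
  rw [mul_sum, mul_sum, sum_congr rfl hterm, sum_add_distrib, ← mul_sum, ← diagChooseSum,
    diagChooseSum_add_one]
  ring

lemma add_one_mul_sum_neg_one_pow_mul_choose_div {K : Type*} [Field K] [CharZero K] {n : ℕ}
    (hn : 2 ≤ n) :
    (n + 1) * ∑ k ∈ range (n - 1), (-1) ^ k * ((n - 1 - k).choose k : K) / (k + 1) =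
      1 + diagChooseSum (-1) (n - 1) - diagChooseSum (-1) (n + 1) := by
  obtain ⟨m, rfl⟩ : ∃ m, n = m + 1 := ⟨n - 1, by omega⟩
  have h := add_two_mul_sum_pow_mul_choose_div (-1 : K) m
  rw [sum_range_succ, Nat.sub_self, choose_eq_zero_of_lt (by omega)] at h
  push_cast [Nat.add_sub_cancel] at h ⊢
  linear_combination -h

end diagChooseSum

lemma coeff_one_sub_X_mul_one_add_X_pow (k : ℕ) :
    ((1 - X) * (1 + X) ^ (2 * k) : ℤ[X]).coeff k = catalan k := by
  rw [sub_mul, one_mul, coeff_sub, coeff_one_add_X_pow]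
  rcases k with _ | k
  · simp
  · have hcat := succ_mul_catalan_eq_centralBinom (k + 1)
    have hchoose := choose_succ_right_eq (2 * (k + 1)) k
    rw [centralBinom_eq_two_mul_choose] at hcat
    rw [show 2 * (k + 1) - k = k + 2 by omega] at hchoose
    zify at hcat hchoose
    rw [coeff_X_mul, coeff_one_add_X_pow]
    refine mul_left_cancel₀ (show (k + 2 : ℤ) ≠ 0 by positivity) ?_
    linear_combination hchoose - hcat

/-- The complete homogeneous polynomial of degree `n - 1` in `(1 + X) ^ 2` and `X`. Its coefficients
of degree `n - 1` and `n - 2` differ by the sum of the first `n` Catalan numbers. -/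
noncomputable def catalanGeomSum (n : ℕ) : ℤ[X] :=
  ∑ k ∈ range n, ((1 + X) ^ 2) ^ k * X ^ (n - 1 - k)

lemma coeff_one_sub_X_mul_catalanGeomSum (n : ℕ) :
    ((1 - X) * catalanGeomSum n).coeff (n - 1) = ∑ k ∈ range n, (catalan k : ℤ) := by
  rw [catalanGeomSum, mul_sum, finsetSum_coeff]
  refine sum_congr rfl fun k hk ↦ ?_
  rw [mem_range] at hk
  rw [← mul_assoc, ← pow_mul, coeff_mul_X_pow', if_pos (by omega), Nat.sub_sub_self (by omega),
    coeff_one_sub_X_mul_one_add_X_pow]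

lemma catalanGeomSum_mul_cyclotomic_three (n : ℕ) :
    catalanGeomSum n * cyclotomic 3 ℤ = (1 + X) ^ (2 * n) - X ^ n := by
  rw [pow_mul, ← geom_sum₂_mul, cyclotomic_three, catalanGeomSum]
  ring

lemma dvd_of_monic_of_dvd_C_mul {R : Type*} [CommRing R] [IsDomain R] {f g : R[X]} {c : R}
    (hg : g.Monic) (hc : c ≠ 0) (h : g ∣ C c * f) : g ∣ f := by
  rw [← smul_eq_C_mul, ← modByMonic_eq_zero_iff_dvd hg, smul_modByMonic] at h
  rw [← modByMonic_eq_zero_iff_dvd hg]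
  exact (smul_eq_zero.1 h).resolve_left hc

lemma expand_cyclotomic_three {R : Type*} [CommRing R] (n : ℕ) :
    expand R n (cyclotomic 3 R) = X ^ (2 * n) + X ^ n + 1 := by
  simp [cyclotomic_three, ← pow_mul, mul_comm]

lemma degree_one_add_X_pow_sub_lt {R : Type*} [Ring R] [Nontrivial R] {n : ℕ} (hn : n ≠ 0) :
    ((1 + X) ^ n - (1 + X ^ n) : R[X]).degree < n := by
  have hmonic : ((X + C 1 : R[X]) ^ n).Monic := (monic_X_add_C 1).pow n
  have h1 : ((X + C 1 : R[X]) ^ n).degree = n := by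
    rw [degree_eq_natDegree hmonic.ne_zero, natDegree_pow_X_add_C]
  have h2 : (X ^ n + C 1 : R[X]).degree = n := degree_X_pow_add_C (Nat.pos_of_ne_zero hn) 1
  rw [add_comm 1 X, add_comm 1, ← C_1, ← h1]
  apply degree_sub_lt_left (h1.trans h2.symm) hmonic.ne_zero
  rw [hmonic, monic_X_pow_add_C _ hn]

lemma degree_add_two_lt_of_one_add_X_pow_eq {R : Type*} [CommRing R] [IsDomain R] {n : ℕ}
    (hn : n ≠ 0) {c : R} {f : R[X]} (hc : c ≠ 0)
    (hf : (1 + X) ^ n = 1 + X ^ n + C c * (cyclotomic 3 R * f)) : f.degree + 2 < n := by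
  have hdeg := degree_one_add_X_pow_sub_lt (R := R) hn
  rwa [hf, add_sub_cancel_left, degree_C_mul hc, degree_mul, degree_cyclotomic, add_comm] at hdeg

lemma sum_neg_one_pow_mul_choose_succ_mul {R : Type*} [CommRing R] (f : ℕ → R) (m n : ℕ) :
    ∑ k ∈ range (m + 1), (-1) ^ k * ((n + 1).choose k : R) * f k =
      ∑ k ∈ range (m + 1), (-1) ^ k * (n.choose k : R) * f k -
        ∑ k ∈ range m, (-1) ^ k * (n.choose k : R) * f (k + 1) := by
  rw [sum_range_succ', sum_range_succ' _ m, add_sub_right_comm, ← sum_sub_distrib]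
  congr 1
  · refine sum_congr rfl fun k _ ↦ ?_
    rw [choose_succ_succ', cast_add]
    ring
  · simp

lemma coeff_cyclotomic_three_pow {R : Type*} [CommRing R] (n : ℕ) :
    (cyclotomic 3 R ^ n).coeff n =
      ∑ k ∈ range (n + 1), (-1 : R) ^ k * n.choose k * centralBinom (n - k) := by
  have h : cyclotomic 3 R = -X + (X + 1) ^ 2 := by rw [cyclotomic_three]; ring
  rw [h, add_pow, finsetSum_coeff]
  refine sum_congr rfl fun k hk ↦ ?_
  have hkn : k ≤ n := mem_range_succ_iff.1 hk
  rw [neg_pow, ← pow_mul, ← C_eq_natCast, coeff_mul_C, mul_assoc, ← C_1, ← C_neg, ← C_pow,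
    coeff_C_mul, coeff_X_pow_mul', if_pos hkn, C_1, coeff_X_add_one_pow,
    centralBinom_eq_two_mul_choose]
  ring

lemma sum_neg_one_pow_mul_choose_mul_centralBinom {R : Type*} [CommRing R] (n : ℕ) :
    ∑ k ∈ range (n + 1), (-1 : R) ^ k * (n + 1).choose k * centralBinom (n - k) =
      (n + 1) * ∑ k ∈ range (n + 1), (-1 : R) ^ k * n.choose k * catalan (n - k) := by
  rw [mul_sum]
  refine sum_congr rfl fun k hk ↦ ?_
  have hkn : k ≤ n := mem_range_succ_iff.1 hk
  have hchoose := congrArg (Nat.cast (R := R)) (choose_mul_succ_eq n k)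
  rw [← succ_mul_catalan_eq_centralBinom, ← Nat.sub_add_comm hkn]
  push_cast at hchoose ⊢
  linear_combination (-1 : R) ^ (k + 1) * catalan (n - k) * hchoose

section Prime

variable {p : ℕ}

lemma cyclotomic_three_mul_prime_mul (hp : p.Prime) (hp3 : p ≠ 3) :
    cyclotomic (3 * p) ℤ * cyclotomic 3 ℤ = X ^ (2 * p) + X ^ p + 1 := by
  rw [← cyclotomic_expand_eq_cyclotomic_mul hp (mt (prime_dvd_prime_iff_eq hp prime_three).1 hp3),
    expand_cyclotomic_three]

lemma coeff_cyclotomic_three_mul_prime (hp : p.Prime) (hp3 : p ≠ 3) {n : ℕ} (hn : n < p) :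
    (cyclotomic (3 * p) ℤ).coeff n = (-1) ^ n * diagChooseSum (-1) n := by
  have hG := cyclotomic_three_mul_prime_mul hp hp3
  have hprod (m : ℕ) (hm : m + 1 < p) :
      (cyclotomic (3 * p) ℤ * cyclotomic 3 ℤ).coeff (m + 1) = 0 := by
    rw [hG]
    simp [coeff_X_pow, coeff_one, show m + 1 ≠ 2 * p by omega, hm.ne]
  set G := cyclotomic (3 * p) ℤ
  have hsplit : G * cyclotomic 3 ℤ = G + G * X + G * X * X := by rw [cyclotomic_three]; ring
  have hzero : G.coeff 0 = 1 := by
    simpa [cyclotomic_three, mul_coeff_zero, hp.ne_zero, hp.ne_zero.symm] using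
      congrArg (coeff · 0) hG
  induction n using Nat.twoStepInduction with
  | zero => simpa using hzero
  | one =>
    have h := hprod 0 hn
    rw [hsplit, zero_add, coeff_add, coeff_add, coeff_mul_X, coeff_mul_X, coeff_mul_X_zero,
      hzero] at h
    rw [pow_one, diagChooseSum_one]
    linear_combination h
  | more n ih₀ ih₁ =>
    have h := hprod (n + 1) hn
    rw [hsplit, coeff_add, coeff_add, coeff_mul_X, coeff_mul_X, coeff_mul_X, ih₀ (by omega),
      ih₁ (by omega)] at h
    rw [diagChooseSum_add_two]
    linear_combination h

lemma cyclotomic_three_dvd_one_add_X_pow_sub (hp : p.Prime) (hp2 : p ≠ 2) (hp3 : p ≠ 3) :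
    cyclotomic 3 ℤ ∣ (1 + X) ^ p - (1 + X ^ p) := by
  have hsub : cyclotomic 3 ℤ ∣ (1 + X) ^ p - (-X ^ 2) ^ p := by
    convert sub_dvd_pow_sub_pow (1 + X : ℤ[X]) (-X ^ 2) p using 1
    rw [cyclotomic_three]
    ring
  rw [(hp.odd_of_ne_two hp2).neg_pow] at hsub
  convert hsub.sub ⟨_, (cyclotomic_three_mul_prime_mul hp hp3).symm.trans (mul_comm _ _)⟩ using 1
  ring

lemma exists_one_add_X_pow_prime_eq (hp : p.Prime) (hp2 : p ≠ 2) (hp3 : p ≠ 3) :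
    ∃ f : ℤ[X], (1 + X) ^ p = 1 + X ^ p + C (p : ℤ) * (cyclotomic 3 ℤ * f) := by
  obtain ⟨r, hr⟩ := exists_add_pow_prime_eq hp (1 : ℤ[X]) X
  have hr' : (1 + X) ^ p - (1 + X ^ p) = C (p : ℤ) * (X * r) := by
    rw [hr, one_pow, show C (p : ℤ) = (p : ℤ[X]) from map_natCast C p]
    ring
  have hdvd := cyclotomic_three_dvd_one_add_X_pow_sub hp hp2 hp3
  rw [hr'] at hdvd
  obtain ⟨f, hf⟩ :=
    dvd_of_monic_of_dvd_C_mul (cyclotomic.monic 3 ℤ) (mod_cast hp.ne_zero) hdvd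
  exact ⟨f, by rw [← hf, ← hr']; ring⟩

lemma coeff_catalanGeomSum_modEq (hp : p.Prime) (hp2 : p ≠ 2) (hp3 : p ≠ 3) {n : ℕ} (hn : n < p)
    (hn' : p ≤ n + 2) :
    (catalanGeomSum p).coeff n ≡ (cyclotomic (3 * p) ℤ).coeff n [ZMOD p ^ 2] := by
  obtain ⟨f, hf⟩ := exists_one_add_X_pow_prime_eq hp hp2 hp3
  have hfn : f.coeff n = 0 := by
    refine coeff_eq_zero_of_degree_lt ?_
    have :=
      (degree_add_two_lt_of_one_add_X_pow_eq hp.ne_zero (mod_cast hp.ne_zero) hf).trans_le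
        (Nat.cast_le.2 hn')
    push_cast at this
    exact lt_of_add_lt_add_right this
  have hP : catalanGeomSum p = cyclotomic (3 * p) ℤ + C (2 * p : ℤ) * f +
      X ^ p * (C (2 * p : ℤ) * f) + C (p ^ 2 : ℤ) * (cyclotomic 3 ℤ * f ^ 2) := by
    refine mul_right_cancel₀ (cyclotomic_ne_zero 3 ℤ) ?_
    have hG := cyclotomic_three_mul_prime_mul hp hp3
    rw [catalanGeomSum_mul_cyclotomic_three, mul_comm 2 p, pow_mul, hf]
    simp only [C_mul, C_pow, C_ofNat]
    linear_combination -hG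
  refine Int.modEq_iff_dvd.2 ⟨-(cyclotomic 3 ℤ * f ^ 2).coeff n, ?_⟩
  rw [hP, coeff_add, coeff_add, coeff_add, coeff_X_pow_mul', if_neg hn.not_ge, coeff_C_mul,
    coeff_C_mul, hfn]
  ring

lemma sum_catalan_modEq (hp : p.Prime) (hp2 : p ≠ 2) (hp3 : p ≠ 3) :
    ∑ k ∈ range p, (catalan k : ℤ) ≡
      diagChooseSum (-1) (p - 1) - diagChooseSum (-1) (p + 1) [ZMOD p ^ 2] := by
  obtain ⟨n, rfl⟩ : ∃ n, p = n + 2 := ⟨p - 2, by have := hp.two_le; omega⟩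
  have hodd : Odd n := (Nat.odd_add.1 (hp.odd_of_ne_two hp2)).2 even_two
  have hcoeff {m : ℕ} (hm : m < n + 2) (hm' : n ≤ m) :=
    (coeff_catalanGeomSum_modEq hp hp2 hp3 hm (by omega)).trans
      (by rw [coeff_cyclotomic_three_mul_prime hp hp3 hm])
  rw [← coeff_one_sub_X_mul_catalanGeomSum, sub_mul, one_mul, coeff_sub,
    show n + 2 - 1 = n + 1 from rfl, coeff_X_mul, diagChooseSum_neg_one_add_three]
  convert (hcoeff (m := n + 1) (by omega) (by omega)).sub (hcoeff (m := n) (by omega) le_rfl)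
    using 1
  rw [hodd.neg_one_pow, hodd.add_one.neg_one_pow]
  ring

lemma dvd_coeff_pow_prime (hp : p.Prime) (f : ℤ[X]) {i : ℕ} (hi : ¬ p ∣ i) :
    (p : ℤ) ∣ (f ^ p).coeff i := by
  have := Fact.mk hp
  rw [← ZMod.intCast_zmod_eq_zero_iff_dvd, ← eq_intCast (Int.castRingHom (ZMod p)), ← coeff_map,
    Polynomial.map_pow, ← ZMod.expand_card, coeff_expand hp.pos, if_neg hi]

lemma coeff_mul_pow_prime_modEq (hp : p.Prime) (f g : ℤ[X]) :
    ((f * g) ^ p).coeff p ≡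
      f.coeff 0 ^ p * (g ^ p).coeff p + (f ^ p).coeff p * g.coeff 0 ^ p [ZMOD p ^ 2] := by
  obtain ⟨n, rfl⟩ := exists_eq_add_one_of_ne_zero hp.ne_zero
  have hzero (h : ℤ[X]) : (h ^ (n + 1)).coeff 0 = h.coeff 0 ^ (n + 1) := by
    simp [coeff_zero_eq_eval_zero]
  have hmid : (((n + 1 : ℕ) : ℤ) ^ 2) ∣ ∑ k ∈ range n,
      (f ^ (n + 1)).coeff (k + 1) * (g ^ (n + 1)).coeff (n + 1 - (k + 1)) := by
    refine dvd_sum fun k hk ↦ ?_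
    rw [mem_range] at hk
    rw [pow_two]
    exact mul_dvd_mul (dvd_coeff_pow_prime hp f (not_dvd_of_pos_of_lt (by omega) (by omega)))
      (dvd_coeff_pow_prime hp g (not_dvd_of_pos_of_lt (by omega) (by omega)))
  rw [mul_pow, coeff_mul, Nat.sum_antidiagonal_eq_sum_range_succ_mk, sum_range_succ,
    sum_range_succ', Nat.sub_zero, Nat.sub_self, hzero, hzero, add_assoc]
  exact Int.modEq_iff_dvd.2 (by simpa using hmid)

-- `(X - 1) * Φ₃ = X ^ 3 - 1`, and its `p`-th power has no term of degree `p` since `3 ∤ p`.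
lemma coeff_cyclotomic_three_pow_prime_modEq (hp : p.Prime) (hp2 : p ≠ 2) (hp3 : p ≠ 3) :
    (cyclotomic 3 ℤ ^ p).coeff p ≡ 1 [ZMOD p ^ 2] := by
  have h := coeff_mul_pow_prime_modEq hp (X - C 1) (cyclotomic 3 ℤ)
  have hexpand : ((X - C 1) * cyclotomic 3 ℤ) ^ p = expand ℤ 3 ((X - C 1) ^ p) := by
    rw [map_pow, map_sub, expand_X, expand_C, cyclotomic_three, C_1]
    ring
  have hlead : ((X - C 1 : ℤ[X]) ^ p).coeff p = 1 := by
    rw [sub_eq_add_neg, ← C_neg, coeff_X_add_C_pow, Nat.sub_self, pow_zero, choose_self, one_mul,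
      cast_one]
  rw [hexpand, coeff_expand three_pos,
    if_neg (mt (prime_dvd_prime_iff_eq prime_three hp).1 hp3.symm), hlead] at h
  rw [coeff_sub, coeff_X_zero, coeff_C_zero, zero_sub, (hp.odd_of_ne_two hp2).neg_one_pow,
    cyclotomic_coeff_zero ℤ (by norm_num), one_pow] at h
  simpa using h.add_right ((cyclotomic 3 ℤ ^ p).coeff p)

lemma neg_one_pow_mul_choose_prime_sub_one_modEq (hp : p.Prime) {k : ℕ} (hk : k < p) :
    (-1) ^ k * ((p - 1).choose k : ℤ) ≡ 1 [ZMOD p] := by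
  induction k with
  | zero => simp [Int.ModEq.refl]
  | succ k ih =>
    have hpascal : p.choose (k + 1) = (p - 1).choose k + (p - 1).choose (k + 1) := by
      rw [← choose_succ_succ', Nat.sub_add_cancel hp.one_le]
    obtain ⟨c, hc⟩ := hp.dvd_choose_self k.succ_ne_zero hk
    refine .trans (Int.modEq_iff_dvd.2 ⟨(-1) ^ k * c, ?_⟩) (ih (by omega))
    rw [hpascal] at hc
    zify at hc
    linear_combination (-1) ^ k * hc

lemma sum_neg_one_pow_mul_choose_prime_mul_centralBinom_modEq (hp : p.Prime) :
    ∑ k ∈ range p, (-1 : ℤ) ^ k * p.choose k * centralBinom (p - 1 - k) ≡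
      p * ∑ k ∈ range p, (catalan k : ℤ) [ZMOD p ^ 2] := by
  have hexact := sum_neg_one_pow_mul_choose_mul_centralBinom (R := ℤ) (p - 1)
  rw [← cast_add_one, Nat.sub_add_cancel hp.one_le] at hexact
  rw [hexact, ← sum_range_reflect (fun k ↦ (catalan k : ℤ)), pow_two]
  refine (Int.ModEq.sum fun k hk ↦ ?_).mul_left'
  simpa using (neg_one_pow_mul_choose_prime_sub_one_modEq hp (mem_range.1 hk)).mul_right
    (catalan (p - 1 - k) : ℤ)

lemma sum_neg_one_pow_mul_choose_prime_succ_mul_centralBinom_modEq (hp : p.Prime) (hp2 : p ≠ 2)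
    (hp3 : p ≠ 3) :
    ∑ k ∈ range (p + 1), (-1 : ℤ) ^ k * (p + 1).choose k * centralBinom (p - k) ≡
      1 - p * ∑ k ∈ range p, (catalan k : ℤ) [ZMOD p ^ 2] := by
  rw [sum_neg_one_pow_mul_choose_succ_mul (fun k ↦ (centralBinom (p - k) : ℤ)),
    ← coeff_cyclotomic_three_pow]
  refine (coeff_cyclotomic_three_pow_prime_modEq hp hp2 hp3).sub ?_
  simpa only [Nat.sub_sub, add_comm 1] using
    sum_neg_one_pow_mul_choose_prime_mul_centralBinom_modEq hp

lemma one_add_diagChooseSum_sub_mul_sum_catalan_modEq (hp : p.Prime) (hp2 : p ≠ 2)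
    (hp3 : p ≠ 3) :
    1 + diagChooseSum (-1) (p - 1) - diagChooseSum (-1) (p + 1) -
        (p + 1) * ∑ k ∈ range (p - 1), (catalan k : ℤ) ≡
      (p + 1) * catalan (p - 1) +
        ∑ k ∈ range (p + 1), (-1 : ℤ) ^ k * (p + 1).choose k * centralBinom (p - k)
      [ZMOD p ^ 2] := by
  have hS := sum_catalan_modEq hp hp2 hp3
  have hT := sum_neg_one_pow_mul_choose_prime_succ_mul_centralBinom_modEq hp hp2 hp3
  have hlast : ∑ k ∈ range p, (catalan k : ℤ) =
      ∑ k ∈ range (p - 1), (catalan k : ℤ) + catalan (p - 1) := by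
    rw [← sum_range_succ, Nat.sub_add_cancel hp.one_le]
  rw [hlast] at hS hT
  obtain ⟨a, ha⟩ := hS.dvd
  obtain ⟨b, hb⟩ := hT.dvd
  exact Int.modEq_iff_dvd.2 ⟨-(a + b), by linear_combination -ha - hb⟩

end Prime

theorem harmonic_catalan_sum_congruence (p : ℕ) (hp : p.Prime) (hp5 : 5 ≤ p) :
    ratCongr p 2
      ((p : ℚ) * ∑ k ∈ Finset.range (p - 1),
        ((2 * k).choose k : ℚ) / (k + 1) * (H k - H (2 * k)))
      (((2 * p - 2).choose (p - 1) : ℚ) / p +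
        (1 / (p + 1 : ℚ)) * ∑ k ∈ Finset.range (p + 1),
          (-1 : ℚ) ^ k * ((p + 1).choose k : ℚ) * ((2 * p - 2 * k).choose (p - k) : ℚ)) := by
  have hcatalan : (catalan (p - 1) : ℚ) = ((2 * p - 2).choose (p - 1) : ℚ) / p := by
    rw [cast_catalan, ← cast_add_one, Nat.sub_add_cancel hp.one_le, Nat.mul_sub]
  rw [mul_sum]
  refine (ratCongr.sum hp fun k hk ↦ ratCongr_mul_catalan_mul_harmonic_sub hp
    (by rw [mem_range] at hk; omega)).trans hp ?_
  simp only [← hcatalan, ← Nat.mul_sub, ← centralBinom_eq_two_mul_choose, sum_sub_distrib]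
  refine .of_mul_eq_intCast (t := p + 1) ?_ ?_ ?_
    (one_add_diagChooseSum_sub_mul_sum_catalan_modEq hp (by omega) (by omega))
  · rw [Int.dvd_add_right (dvd_refl _)]
    exact mod_cast hp.not_dvd_one
  · push_cast
    linear_combination add_one_mul_sum_neg_one_pow_mul_choose_div (K := ℚ) hp.two_le
  · push_cast
    field_simp
end
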